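/- arXiv:2105.07254 — 3 statements merged into one kernel-verified Lean document; each statement's English description precedes it below -/
import Mathlib

section
/- Let 𝔤 be a finite-dimensional Lie algebra over a field of characteristic zero and 𝔤₀ ⊆ 𝔤 a nonzero Lie subalgebra such that the pair (𝔤,𝔤₀) is effective and 𝔤₀ is a semisimple Lie algebra. Then the order of the pair equals 1; that is, 𝔤₁ = {x ∈ 𝔤₀ : [x,y] ∈ 𝔤₀ for all y ∈ 𝔤} = 0 (while 𝔤₀ ≠ 0). -/
/-!
The Weisfeiler filtration satisfies `⁅𝔤ᵢ, 𝔤ⱼ⁆ ⊆ 𝔤ᵢ₊ⱼ`, by the Jacobi identity. So if the ideal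
`𝔤₁` of `𝔤₀` is perfect, then `𝔤₁ = ⁅𝔤₁, 𝔤₁⁆ ⊆ 𝔤₂`, that is, `⁅𝔤₁, 𝔤⁆ ⊆ 𝔤₁`. Thus `𝔤₁` is an
ideal of `𝔤` contained in `𝔤₀`, and it vanishes by effectiveness. Every ideal of a semisimple Lie
algebra is perfect, being a sum of non-abelian minimal ideals.
-/

/-- One step of the Weisfeiler filtration: `{x ∈ S | ∀ y, ⁅x, y⁆ ∈ S}`. -/
def weisfeilerStep {K L : Type*} [Field K] [LieRing L] [LieAlgebra K L]
    (S : Submodule K L) : Submodule K L where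
  carrier := {x | x ∈ S ∧ ∀ y : L, ⁅x, y⁆ ∈ S}
  add_mem' := fun ha hb => ⟨S.add_mem ha.1 hb.1, fun y => by
    rw [add_lie]; exact S.add_mem (ha.2 y) (hb.2 y)⟩
  zero_mem' := ⟨S.zero_mem, fun y => by rw [zero_lie]; exact S.zero_mem⟩
  smul_mem' := fun c x hx => ⟨S.smul_mem c hx.1, fun y => by
    rw [smul_lie]; exact S.smul_mem c (hx.2 y)⟩

/-- The Weisfeiler filtration of the pair `(L, g₀)`:
`W 0 = g₀` and `W (k+1) = {x ∈ W k | ∀ y : L, ⁅x, y⁆ ∈ W k}`. -/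
def weisfeiler {K L : Type*} [Field K] [LieRing L] [LieAlgebra K L]
    (g₀ : LieSubalgebra K L) : ℕ → Submodule K L
  | 0 => g₀.toSubmodule
  | (k + 1) => weisfeilerStep (weisfeiler g₀ k)

/-- The pair `(L, g₀)` is effective: the only ideal of `L` contained in `g₀` is zero. -/
def IsEffectivePair {K L : Type*} [Field K] [LieRing L] [LieAlgebra K L]
    (g₀ : LieSubalgebra K L) : Prop :=
  ∀ I : LieIdeal K L, (I : Submodule K L) ≤ g₀.toSubmodule → I = ⊥

theorem lieIdeal_lie_self_of_isSemisimple {R M : Type*} [CommRing R] [LieRing M] [LieAlgebra R M]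
    [LieAlgebra.IsSemisimple R M] (I : LieIdeal R M) : ⁅I, I⁆ = I := by
  have : IsAtomistic (LieIdeal R M) :=
    (LieAlgebra.IsSemisimple.booleanGenerators R M).isAtomistic_of_sSup_eq_top
      LieAlgebra.IsSemisimple.sSup_atoms_eq_top
  refine (LieSubmodule.lie_le_right I I).antisymm (le_iff_atom_le_imp.mpr fun A hA hAI => ?_)
  have hA_lie : ⁅A, A⁆ ≠ ⊥ := fun h => LieAlgebra.IsSemisimple.non_abelian_of_isAtom A hA
    ((LieSubmodule.lie_abelian_iff_lie_self_eq_bot A).mpr h)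
  calc A = ⁅A, A⁆ := ((hA.le_iff.mp (LieSubmodule.lie_le_right A A)).resolve_left hA_lie).symm
    _ ≤ ⁅I, I⁆ := LieSubmodule.mono_lie hAI hAI

section Weisfeiler

variable {K L : Type*} [Field K] [LieRing L] [LieAlgebra K L] {g₀ : LieSubalgebra K L}

theorem mem_weisfeiler_succ {k : ℕ} {x : L} :
    x ∈ weisfeiler g₀ (k + 1) ↔ x ∈ weisfeiler g₀ k ∧ ∀ y : L, ⁅x, y⁆ ∈ weisfeiler g₀ k :=
  Iff.rfl

theorem antitone_weisfeiler : Antitone (weisfeiler g₀) :=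
  antitone_nat_of_succ_le fun _ _ hx => hx.1

theorem weisfeiler_le (k : ℕ) : weisfeiler g₀ k ≤ g₀.toSubmodule :=
  antitone_weisfeiler k.zero_le

theorem lie_mem_weisfeiler {a x : L} {k : ℕ} (ha : a ∈ g₀) (hx : x ∈ weisfeiler g₀ k) :
    ⁅a, x⁆ ∈ weisfeiler g₀ k := by
  induction k generalizing x with
  | zero => exact g₀.lie_mem ha hx
  | succ k ih =>
    obtain ⟨hx, hxL⟩ := mem_weisfeiler_succ.mp hx
    refine mem_weisfeiler_succ.mpr ⟨ih hx, fun y => ?_⟩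
    rw [lie_lie]
    exact sub_mem (ih (hxL y)) (hxL ⁅a, y⁆)

theorem lie_mem_weisfeiler_add {x y : L} {i j : ℕ} (hx : x ∈ weisfeiler g₀ i)
    (hy : y ∈ weisfeiler g₀ j) : ⁅x, y⁆ ∈ weisfeiler g₀ (i + j) := by
  induction i generalizing x y j with
  | zero => simpa only [zero_add] using lie_mem_weisfeiler hx hy
  | succ i ih_i =>
    induction j generalizing y with
    | zero =>
      rw [← lie_skew]
      exact neg_mem (lie_mem_weisfeiler hy hx)
    | succ j ih_j =>
      obtain ⟨-, hxL⟩ := mem_weisfeiler_succ.mp hx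
      obtain ⟨hy', hyL⟩ := mem_weisfeiler_succ.mp hy
      refine mem_weisfeiler_succ.mpr ⟨ih_j hy', fun z => ?_⟩
      have h_left : ⁅x, ⁅y, z⁆⁆ ∈ weisfeiler g₀ (i + 1 + j) := ih_j (hyL z)
      have h_right : ⁅y, ⁅x, z⁆⁆ ∈ weisfeiler g₀ (i + 1 + j) := by
        rw [← lie_skew, add_right_comm]
        exact neg_mem (ih_i (hxL z) hy)
      rw [lie_lie]
      exact sub_mem h_left h_right

variable (g₀) in
/-- The `k`-th term `𝔤ₖ` of the Weisfeiler filtration as an ideal of `𝔤₀`, so that products and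
perfectness of ideals make sense for it. It is encoded as the preimage of `weisfeiler g₀ k` under
the inclusion of `𝔤₀`. -/
def weisfeilerIdeal (k : ℕ) : LieIdeal K g₀ where
  __ := (weisfeiler g₀ k).comap g₀.toSubmodule.subtype
  lie_mem {a _} hx := lie_mem_weisfeiler a.2 hx

theorem mem_weisfeilerIdeal {k : ℕ} {x : g₀} :
    x ∈ weisfeilerIdeal g₀ k ↔ (x : L) ∈ weisfeiler g₀ k :=
  Iff.rfl

theorem weisfeilerIdeal_le_iff {i j : ℕ} :
    weisfeilerIdeal g₀ i ≤ weisfeilerIdeal g₀ j ↔ weisfeiler g₀ i ≤ weisfeiler g₀ j :=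
  ⟨fun h x hx => mem_weisfeilerIdeal.mp (h (x := ⟨x, weisfeiler_le i hx⟩) hx), fun h _ hx => h hx⟩

theorem lie_weisfeilerIdeal_le (i j : ℕ) :
    ⁅weisfeilerIdeal g₀ i, weisfeilerIdeal g₀ j⁆ ≤ weisfeilerIdeal g₀ (i + j) :=
  (LieSubmodule.lie_le_iff ..).mpr fun _ hx _ hy => lie_mem_weisfeiler_add hx hy

theorem IsEffectivePair.weisfeiler_eq_bot_of_le_succ (heff : IsEffectivePair g₀) {k : ℕ}
    (h : weisfeiler g₀ k ≤ weisfeiler g₀ (k + 1)) : weisfeiler g₀ k = ⊥ := by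
  let I : LieIdeal K L :=
    { weisfeiler g₀ k with
      lie_mem := fun {y x} hx => by
        rw [← lie_skew]
        exact neg_mem ((mem_weisfeiler_succ.mp (h hx)).2 y) }
  have hI : I = ⊥ := heff I (weisfeiler_le k)
  exact congrArg LieSubmodule.toSubmodule hI

theorem order_eq_one_of_stabilizer_isSemisimple_general (heff : IsEffectivePair g₀) {k : ℕ}
    (hperf : ⁅weisfeilerIdeal g₀ (k + 1), weisfeilerIdeal g₀ (k + 1)⁆ =
      weisfeilerIdeal g₀ (k + 1)) :
    weisfeiler g₀ (k + 1) = ⊥ := by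
  refine heff.weisfeiler_eq_bot_of_le_succ (weisfeilerIdeal_le_iff.mp ?_)
  calc weisfeilerIdeal g₀ (k + 1)
      = ⁅weisfeilerIdeal g₀ (k + 1), weisfeilerIdeal g₀ (k + 1)⁆ := hperf.symm
    _ ≤ weisfeilerIdeal g₀ (k + 1 + (k + 1)) := lie_weisfeilerIdeal_le _ _
    _ ≤ weisfeilerIdeal g₀ (k + 1 + 1) :=
      weisfeilerIdeal_le_iff.mpr (antitone_weisfeiler (by lia))

end Weisfeiler

/-- If `𝔤₀` is a nonzero semisimple subalgebra and `(𝔤, 𝔤₀)` is effective, then the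
order of the pair is `1`, i.e. `𝔤₁ = {x ∈ 𝔤₀ : ⁅x, y⁆ ∈ 𝔤₀ for all y} = 0`. -/
theorem order_eq_one_of_stabilizer_isSemisimple
    {K : Type*} [Field K] [CharZero K]
    {L : Type*} [LieRing L] [LieAlgebra K L] [Module.Finite K L]
    (g₀ : LieSubalgebra K L) (hg₀ : g₀ ≠ ⊥) (heff : IsEffectivePair g₀)
    (hss : LieAlgebra.IsSemisimple K g₀) :
    weisfeiler g₀ 1 = ⊥ :=
  order_eq_one_of_stabilizer_isSemisimple_general heff (lieIdeal_lie_self_of_isSemisimple _)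
end

section
/- Let 𝔤 be a finite-dimensional Lie algebra over a field of characteristic zero and 𝔤₀ ⊆ 𝔤 a Lie subalgebra such that the pair (𝔤,𝔤₀) is effective with order r = o(𝔤,𝔤₀) ≥ 1, and let a ∈ 𝔤_{r−1} with a ≠ 0. Then there exist elements x₁, …, x_{r−1} ∈ 𝔤 with x_i ∉ 𝔤₀ for all i, such that for every 1 ≤ i ≤ r−1 the iterated bracket ad(x_i)∘⋯∘ad(x₁)(a) = [x_i, [x_{i−1}, …, [x₁, a]…]] lies in 𝔤_{r−1−i} but not in 𝔤_{r−i}. -/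
/-- Iterated adjoint action: `iterBracket x a i = ⁅x i, ⁅x (i-1), …, ⁅x 1, a⁆…⁆⁆`,
with `iterBracket x a 0 = a`. -/
def iterBracket {L : Type*} [LieRing L] (x : ℕ → L) (a : L) : ℕ → L
  | 0 => a
  | (i + 1) => ⁅x (i + 1), iterBracket x a i⁆

/-!
Say that `a` has depth `k` if it lies in `𝔤_k` but not in `𝔤_{k+1}`. If `a` has depth `k + 1`, its
absence from `𝔤_{k+2}` is witnessed by some `y` with `⁅y, a⁆` of depth `k`. By the Leibniz rule
every `𝔤_{k+1}` is stable under `ad 𝔤₀`, so this `y` cannot lie in `𝔤₀`. As `𝔤_r = 0`, a nonzero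
element of `𝔤_{r-1}` has depth `r - 1`, and each bracket lowers the depth by exactly one.
-/

section WeisfeilerFiltration

variable {K L : Type*} [Field K] [LieRing L] [LieAlgebra K L] {g₀ : LieSubalgebra K L}

theorem mem_weisfeiler_succ_iff {k : ℕ} {b : L} :
    b ∈ weisfeiler g₀ (k + 1) ↔ b ∈ weisfeiler g₀ k ∧ ∀ y : L, ⁅y, b⁆ ∈ weisfeiler g₀ k := by
  have mem_lie_comm (y : L) : ⁅b, y⁆ ∈ weisfeiler g₀ k ↔ ⁅y, b⁆ ∈ weisfeiler g₀ k := by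
    rw [← lie_skew, neg_mem_iff]
  exact and_congr_right' (forall_congr' mem_lie_comm)

theorem lie_mem_weisfeiler_s6 {k : ℕ} {y b : L} (hy : y ∈ g₀) (hb : b ∈ weisfeiler g₀ k) :
    ⁅y, b⁆ ∈ weisfeiler g₀ k := by
  induction k generalizing b with
  | zero => exact g₀.lie_mem hy hb
  | succ k ih =>
    have lie_b_mem := (mem_weisfeiler_succ_iff.1 hb).2
    refine mem_weisfeiler_succ_iff.2 ⟨lie_b_mem y, fun z => ?_⟩
    rw [leibniz_lie]
    exact add_mem (lie_b_mem ⁅z, y⁆) (ih (lie_b_mem z))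

theorem exists_lie_mem_weisfeiler_notMem_succ {k : ℕ} {b : L}
    (hb : b ∈ weisfeiler g₀ (k + 1)) (hb' : b ∉ weisfeiler g₀ (k + 2)) :
    ∃ y ∉ g₀, ⁅y, b⁆ ∈ weisfeiler g₀ k ∧ ⁅y, b⁆ ∉ weisfeiler g₀ (k + 1) := by
  obtain ⟨y, hy⟩ : ∃ y, ⁅y, b⁆ ∉ weisfeiler g₀ (k + 1) := by
    by_contra! h
    exact hb' (mem_weisfeiler_succ_iff.2 ⟨hb, h⟩)
  exact ⟨y, fun hy₀ => hy (lie_mem_weisfeiler_s6 hy₀ hb), (mem_weisfeiler_succ_iff.1 hb).2 y, hy⟩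

end WeisfeilerFiltration

-- `iterBracket` never reads index `0`, so that slot of `x` is free to hold the new first element.
theorem iterBracket_update_zero_pred_succ {L : Type*} [LieRing L] (x : ℕ → L) (y a : L) (i : ℕ) :
    iterBracket (fun j => Function.update x 0 y (j - 1)) a (i + 1) = iterBracket x ⁅y, a⁆ i := by
  induction i with
  | zero => simp [iterBracket]
  | succ i ih =>
    rw [iterBracket, ih]
    simp [iterBracket]

theorem exists_iterated_bracket_chain_general
    {K L : Type*} [Field K] [LieRing L] [LieAlgebra K L] (g₀ : LieSubalgebra K L)
    {n : ℕ} {a : L} (ha : a ∈ weisfeiler g₀ n) (ha' : a ∉ weisfeiler g₀ (n + 1)) :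
    ∃ x : ℕ → L,
      (∀ i : ℕ, 1 ≤ i → i ≤ n → x i ∉ g₀) ∧
      (∀ i : ℕ, 1 ≤ i → i ≤ n →
        iterBracket x a i ∈ weisfeiler g₀ (n - i) ∧
        iterBracket x a i ∉ weisfeiler g₀ (n + 1 - i)) := by
  induction n generalizing a with
  | zero => exact ⟨0, by lia, by lia⟩
  | succ n ih =>
    obtain ⟨y, hy, hya, hya'⟩ := exists_lie_mem_weisfeiler_notMem_succ ha ha'
    obtain ⟨x, hx, hchain⟩ := ih hya hya'
    refine ⟨fun j => Function.update x 0 y (j - 1), fun i hi hin => ?_, fun i hi hin => ?_⟩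
    · obtain rfl | hi := hi.eq_or_lt
      · simpa using hy
      · simpa [show i - 1 ≠ 0 by lia] using hx (i - 1) (by lia) (by lia)
    · obtain ⟨i, rfl⟩ := Nat.exists_eq_add_of_le' hi
      rw [iterBracket_update_zero_pred_succ, Nat.add_sub_add_right, Nat.add_sub_add_right]
      obtain rfl | hi := i.eq_zero_or_pos
      · exact ⟨hya, hya'⟩
      · exact hchain i hi (by lia)

/-- Let `(𝔤, 𝔤₀)` be effective of order `r ≥ 1` and `0 ≠ a ∈ 𝔤_{r-1}`.  Then there are
`x₁, …, x_{r-1} ∈ 𝔤 ∖ 𝔤₀` such that for `1 ≤ i ≤ r-1` the iterated bracket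
`⁅x_i, ⁅x_{i-1}, …, ⁅x₁, a⁆…⁆⁆` lies in `𝔤_{r-1-i}` but not in `𝔤_{r-i}`. -/
theorem exists_iterated_bracket_chain
    {K : Type*} [Field K] [CharZero K]
    {L : Type*} [LieRing L] [LieAlgebra K L] [Module.Finite K L]
    (g₀ : LieSubalgebra K L) (heff : IsEffectivePair g₀)
    (r : ℕ) (hr : 1 ≤ r)
    (hbot : weisfeiler g₀ r = ⊥) (hmin : ∀ s < r, weisfeiler g₀ s ≠ ⊥)
    (a : L) (ha : a ∈ weisfeiler g₀ (r - 1)) (ha0 : a ≠ 0) :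
    ∃ x : ℕ → L,
      (∀ i : ℕ, 1 ≤ i → i ≤ r - 1 → x i ∉ g₀) ∧
      (∀ i : ℕ, 1 ≤ i → i ≤ r - 1 →
        iterBracket x a i ∈ weisfeiler g₀ (r - 1 - i) ∧
        iterBracket x a i ∉ weisfeiler g₀ (r - i)) := by
  obtain ⟨n, rfl⟩ := Nat.exists_eq_add_of_le' hr
  have ha' : a ∉ weisfeiler g₀ (n + 1) := by rwa [hbot, Submodule.mem_bot]
  exact exists_iterated_bracket_chain_general g₀ ha ha'
end

section
/- Let 𝔤 be a finite-dimensional Lie algebra over a field of characteristic zero and let 𝔨 ⊆ 𝔥 ⊆ 𝔤 be Lie subalgebras such that 𝔥 is an ideal of 𝔤 and 𝔨 is an ideal of 𝔥. Let (𝔨_i) denote the Weisfeiler filtration of the pair (𝔤, 𝔨) (so 𝔨₀ = 𝔨) and let 𝔨^(i) denote the i-th term of the derived series of 𝔨. Then 𝔨^(i) ⊆ 𝔨_i for every i ≥ 0. -/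
/-- The derived series of a subalgebra `k`, as submodules of the ambient Lie algebra:
`D 0 = k` and `D (i+1) = span ⁅D i, D i⁆`. -/
def derivedSeriesIn {K L : Type*} [Field K] [LieRing L] [LieAlgebra K L]
    (k : LieSubalgebra K L) : ℕ → Submodule K L
  | 0 => k.toSubmodule
  | (i + 1) => Submodule.span K
      {z | ∃ x ∈ derivedSeriesIn k i, ∃ y ∈ derivedSeriesIn k i, z = ⁅x, y⁆}

/-!
If `x, y ∈ 𝔨ᵢ`, the Jacobi identity gives `⁅⁅x, y⁆, z⁆ = ⁅x, ⁅y, z⁆⁆ - ⁅y, ⁅x, z⁆⁆`. Since `x` and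
`y` lie in the ideal `𝔥`, so do `⁅x, z⁆` and `⁅y, z⁆`, and these bracket `𝔨ᵢ` into itself because
the Weisfeiler filtration is stable under everything that normalizes `𝔨`. Hence
`⁅𝔨ᵢ, 𝔨ᵢ⁆ ⊆ 𝔨ᵢ₊₁`.
-/

section

variable {K L : Type*} [Field K] [LieRing L] [LieAlgebra K L]

theorem mem_weisfeilerStep {S : Submodule K L} {x : L} :
    x ∈ weisfeilerStep S ↔ x ∈ S ∧ ∀ y : L, ⁅x, y⁆ ∈ S :=
  Iff.rfl

theorem weisfeilerStep_le (S : Submodule K L) : weisfeilerStep S ≤ S :=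
  fun _ hx => (mem_weisfeilerStep.1 hx).1

theorem weisfeiler_antitone (k : LieSubalgebra K L) : Antitone (weisfeiler k) :=
  antitone_nat_of_succ_le fun i => weisfeilerStep_le (weisfeiler k i)

theorem weisfeiler_le_s11 (k : LieSubalgebra K L) (i : ℕ) : weisfeiler k i ≤ k.toSubmodule :=
  weisfeiler_antitone k (Nat.zero_le i)

theorem lie_mem_weisfeilerStep {S : Submodule K L} {x y : L} (hx : ∀ s ∈ S, ⁅x, s⁆ ∈ S)
    (hy : y ∈ weisfeilerStep S) : ⁅x, y⁆ ∈ weisfeilerStep S := by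
  obtain ⟨hyS, hyL⟩ := mem_weisfeilerStep.1 hy
  refine mem_weisfeilerStep.2 ⟨hx y hyS, fun z => ?_⟩
  rw [lie_lie]
  exact S.sub_mem (hx _ (hyL z)) (hyL ⁅x, z⁆)

theorem lie_mem_weisfeiler_of_mem_normalizer {k : LieSubalgebra K L} {x : L}
    (hx : x ∈ k.normalizer) (i : ℕ) : ∀ y ∈ weisfeiler k i, ⁅x, y⁆ ∈ weisfeiler k i := by
  induction i with
  | zero => exact (k.mem_normalizer_iff x).1 hx
  | succ i ih => exact fun _ hy => lie_mem_weisfeilerStep ih hy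

theorem lie_mem_weisfeilerStep_of_mem_lieIdeal {I : LieIdeal K L} {S : Submodule K L}
    (hIS : ∀ a ∈ I, ∀ s ∈ S, ⁅a, s⁆ ∈ S) {x y : L} (hxI : x ∈ I) (hyI : y ∈ I)
    (hxS : x ∈ S) (hyS : y ∈ S) : ⁅x, y⁆ ∈ weisfeilerStep S := by
  have lie_lie_mem {a s : L} (ha : a ∈ I) (hs : s ∈ S) (z : L) : ⁅s, ⁅a, z⁆⁆ ∈ S := by
    rw [← lie_skew]
    exact S.neg_mem (hIS _ (lie_mem_left K L I a z ha) s hs)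
  refine mem_weisfeilerStep.2 ⟨hIS x hxI y hyS, fun z => ?_⟩
  rw [lie_lie]
  exact S.sub_mem (lie_lie_mem hyI hxS z) (lie_lie_mem hxI hyS z)

theorem derivedSeries_le_weisfeiler_general (k : LieSubalgebra K L) (I : LieIdeal K L)
    (hkI : k ≤ I.toLieSubalgebra) (hIk : I.toLieSubalgebra ≤ k.normalizer) (i : ℕ) :
    derivedSeriesIn k i ≤ weisfeiler k i := by
  induction i with
  | zero => exact le_rfl
  | succ i ih =>
    have mem_ideal {x : L} (hx : x ∈ weisfeiler k i) : x ∈ I :=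
      hkI (weisfeiler_le_s11 k i hx)
    refine Submodule.span_le.2 ?_
    rintro _ ⟨x, hx, y, hy, rfl⟩
    exact lie_mem_weisfeilerStep_of_mem_lieIdeal
      (fun _ ha => lie_mem_weisfeiler_of_mem_normalizer (hIk ha) i)
      (mem_ideal (ih hx)) (mem_ideal (ih hy)) (ih hx) (ih hy)

end

/-- If `𝔨 ⊆ 𝔥 ⊆ 𝔤` with `𝔥` an ideal of `𝔤` and `𝔨` an ideal of `𝔥`, then the derived
series of `𝔨` is contained termwise in the Weisfeiler filtration of the pair `(𝔤, 𝔨)`. -/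
theorem derivedSeries_le_weisfeiler
    {K : Type*} [Field K] [CharZero K]
    {L : Type*} [LieRing L] [LieAlgebra K L] [Module.Finite K L]
    (k h : LieSubalgebra K L) (hkh : k ≤ h)
    (hideal_hg : ∀ x : L, ∀ y ∈ h, ⁅x, y⁆ ∈ h)
    (hideal_kh : ∀ x ∈ h, ∀ y ∈ k, ⁅x, y⁆ ∈ k) :
    ∀ i : ℕ, derivedSeriesIn k i ≤ weisfeiler k i := by
  obtain ⟨I, rfl⟩ := (LieSubalgebra.exists_lieIdeal_coe_eq_iff K h).2 hideal_hg
  exact derivedSeries_le_weisfeiler_general k I hkh fun x hx =>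
    (k.mem_normalizer_iff x).2 (hideal_kh x hx)
end
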